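/- Let X, V_η, V_φ, V_z be a characteristic curve of the Taylor–Couette transport field on an interval I. If s₀, s₁ ∈ I satisfy X(s₀) = X(s₁) (the radial position returns to its initial value), then V_φ(s₁) = V_φ(s₀) and V_η(s₁)² = V_η(s₀)²; that is, the angular velocity is restored and the radial speed is preserved at the return. -/

import Mathlib

open Set

lemma const_of_hasDerivAt_zero {I : Set ℝ} (hI : I.OrdConnected) {f : ℝ → ℝ}
    (hf : ∀ s ∈ I, HasDerivAt f 0 s) {a b : ℝ} (ha : a ∈ I) (hb : b ∈ I) : f b = f a := by
  have h := Convex.norm_image_sub_le_of_norm_hasDerivWithin_le (f := f) (f' := fun _ => 0)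
    (s := I) (C := 0) (x := a) (y := b)
    (fun x hx => (hf x hx).hasDerivWithinAt) (by simp) hI.convex ha hb
  simp only [zero_mul, norm_le_zero_iff] at h
  linarith

/-- Bounce-back property of characteristic curves of the Taylor–Couette transport
field: if the radial position returns to its initial value, `X(s₀) = X(s₁)`, then
the angular velocity is restored, `V_φ(s₁) = V_φ(s₀)`, and the radial speed is
preserved, `V_η(s₁)² = V_η(s₀)²`. -/
theorem bounce_back
    (α η₁ : ℝ) (hα : 0 < α) (hη₁ : 0 < η₁) (hη₁' : η₁ < 1)
    (I : Set ℝ) (hI : I.OrdConnected)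
    (X Vη Vφ Vz : ℝ → ℝ)
    (hX1 : ∀ s ∈ I, X s < 1)
    (hX : ∀ s ∈ I, HasDerivAt X (Vη s) s)
    (hVη : ∀ s ∈ I, HasDerivAt Vη (-(Vφ s) ^ 2 / (1 - X s)) s)
    (hVφ : ∀ s ∈ I, HasDerivAt Vφ (Vη s * Vφ s / (1 - X s) - α / η₁ * Vη s) s)
    (hVz : ∀ s ∈ I, HasDerivAt Vz 0 s) :
    ∀ s₀ ∈ I, ∀ s₁ ∈ I, X s₀ = X s₁ →
      Vφ s₁ = Vφ s₀ ∧ (Vη s₁) ^ 2 = (Vη s₀) ^ 2 := by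
  intro s₀ h0 s₁ h1 hx
  set a := α / η₁ with ha
  have hu : ∀ s ∈ I, HasDerivAt (fun t => 1 - X t) (-(Vη s)) s :=
    fun s hs => (hX s hs).const_sub 1
  have hL : ∀ s ∈ I, ∀ t ∈ I, (1 - X t) * Vφ t - a / 2 * (1 - X t) ^ 2
      = (1 - X s) * Vφ s - a / 2 * (1 - X s) ^ 2 := by
    intro s hs t ht
    refine const_of_hasDerivAt_zero
      (f := fun t => (1 - X t) * Vφ t - a / 2 * (1 - X t) ^ 2) hI ?_ hs ht
    intro r hr
    have hne : 1 - X r ≠ 0 := (sub_pos.2 (hX1 r hr)).ne'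
    refine (((hu r hr).mul (hVφ r hr)).sub (((hu r hr).pow 2).const_mul (a / 2))).congr_deriv ?_
    field_simp
    ring
  have hφ : Vφ s₁ = Vφ s₀ := by
    have h := hL s₀ h0 s₁ h1
    rw [← hx] at h
    have hp : 1 - X s₀ ≠ 0 := (sub_pos.2 (hX1 s₀ h0)).ne'
    exact mul_left_cancel₀ hp (by linarith)
  refine ⟨hφ, ?_⟩
  obtain ⟨L, hLdef⟩ : ∃ L, L = (1 - X s₀) * Vφ s₀ - a / 2 * (1 - X s₀) ^ 2 := ⟨_, rfl⟩
  have hE := const_of_hasDerivAt_zero (a := s₀) (b := s₁)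
    (f := fun t => Vη t ^ 2 + Vφ t ^ 2 - (2 * a * L * Real.log (1 - X t)
      + a ^ 2 / 2 * (1 - X t) ^ 2)) hI ?_ h0 h1
  · simp only [← hx, hφ] at hE
    linarith
  · intro r hr
    have hne : 1 - X r ≠ 0 := (sub_pos.2 (hX1 r hr)).ne'
    have hLr : L = (1 - X r) * Vφ r - a / 2 * (1 - X r) ^ 2 := by
      rw [hLdef]; exact hL r hr s₀ h0
    refine ((((hVη r hr).pow 2).add ((hVφ r hr).pow 2)).sub
      ((((hu r hr).log hne).const_mul (2 * a * L)).add
        (((hu r hr).pow 2).const_mul (a ^ 2 / 2)))).congr_deriv ?_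
    rw [hLr]
    clear_value a
    field_simp
    ring
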